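/- With the hypotheses of the Leibniz-commutation lemma (normalized symmetrized left-invariant operators Z^α on SU(2)), for the complex vector fields X_± = -(Z₂ ± iZ₁) and any smooth complex-valued functions f, g on SU(2) and any m ≥ 0: Σ_{|α|=m} ∫_{SU(2)} ((Z^α X_± f)(Z^α g) + (Z^α f)(Z^α X_± g)) dμ = 0, where dμ is the normalized Haar measure. -/

import Mathlib

open Finset

/-- The Levi-Civita symbol on `Fin 3`, with `ε 0 1 2 = 1`. -/
noncomputable def leviCivita (i j k : Fin 3) : ℝ :=
  (((j : ℝ) - (i : ℝ)) * ((k : ℝ) - (j : ℝ)) * ((k : ℝ) - (i : ℝ))) / 2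

/-- The symmetrized operator `Z'^α`. -/
noncomputable def symOp {A : Type*} [AddCommGroup A] [Module ℂ A]
    (Z : Fin 3 → Module.End ℂ A) (α : Fin 3 → ℕ) : Module.End ℂ A :=
  ∑ w ∈ Finset.univ.filter
      (fun w : Fin (α 0 + α 1 + α 2) → Fin 3 =>
        ∀ i : Fin 3, (Finset.univ.filter (fun j => w j = i)).card = α i),
    (List.ofFn (fun j => Z (w j))).prod

/-- The normalized symmetrized operator `Z^α = f(α) Z'^α`. -/
noncomputable def normSymOp {A : Type*} [AddCommGroup A] [Module ℂ A]
    (c : ℝ) (Z : Fin 3 → Module.End ℂ A) (α : Fin 3 → ℕ) : Module.End ℂ A :=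
  ((c * Real.sqrt (((α 0).factorial * (α 1).factorial * (α 2).factorial : ℝ)
      / ((α 0 + α 1 + α 2).factorial : ℝ)) : ℝ) : ℂ) • symOp Z α

/-!
The weight `f(α)² = c² α! / |α|!` is such that `∑_{|α| = m} Z^α ⊗ Z^α` equals
`c² / m! · ∑_σ ∑_w Z_w ⊗ Z_{w ∘ σ}`, over all words `w` of length `m` in the three letters and all
permutations `σ` of their positions: `α!` permutations take one word of multi-index `α` to another.
If `[Z_i, X] = ∑_k C_{ik} Z_k` with `C` skew-symmetric, moving `X` to the left past `Z_w` replaces,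
one position at a time, the letter `w p` by `k` with coefficient `C (w p) k`. Exchanging `w p` and
`k` matches the terms arising in the first tensor factor with the negatives of those in the second.
So `X` obeys the Leibniz rule on the sum, and `∫ X h dμ = 0` finishes the proof.
-/

section Words

variable {κ ι : Type*} [Fintype κ] [DecidableEq ι]

/-- The multi-index of a word `w` in the letters `ι`: how often each letter occurs in `w`. The
letters of `w` are indexed by an arbitrary finite type, `Fin m` for words of length `m`. -/
def letterCount (w : κ → ι) (i : ι) : ℕ := #{j | w j = i}

/-- The product `Z (w 0) * ⋯ * Z (w (m - 1))` of the generators `Z` along a word `w`. -/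
def wordProd {R : Type*} [Monoid R] (Z : ι → R) {m : ℕ} (w : Fin m → ι) : R :=
  (List.ofFn (Z ∘ w)).prod

lemma letterCount_mem_piAntidiag [Fintype ι] (w : κ → ι) :
    letterCount w ∈ piAntidiag univ (Fintype.card κ) := by
  rw [mem_piAntidiag]
  exact ⟨(card_eq_sum_card_fiberwise fun _ _ ↦ mem_coe.2 (mem_univ _)).symm, by simp⟩

lemma letterCount_comp_perm (w : κ → ι) (σ : Equiv.Perm κ) :
    letterCount (w ∘ σ) = letterCount w :=
  funext fun i ↦ card_equiv σ (by simp)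

lemma exists_perm_comp_eq_of_letterCount_eq {w w' : κ → ι} (h : letterCount w' = letterCount w) :
    ∃ σ : Equiv.Perm κ, w ∘ σ = w' := by
  have fiberEquiv (i : ι) : Nonempty ({j // w' j = i} ≃ {j // w j = i}) :=
    ⟨Fintype.equivOfCardEq <| by simpa only [Fintype.card_subtype, letterCount] using congrFun h i⟩
  exact ⟨Equiv.ofFiberEquiv fun i ↦ (fiberEquiv i).some, funext (Equiv.ofFiberEquiv_map _)⟩

variable [DecidableEq κ] [Fintype ι]

lemma card_perm_comp_eq_of_letterCount_eq {w w' : κ → ι} (h : letterCount w' = letterCount w) :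
    #{σ : Equiv.Perm κ | w ∘ σ = w'} = ∏ i, (letterCount w i).factorial := by
  obtain ⟨τ, rfl⟩ := exists_perm_comp_eq_of_letterCount_eq h
  calc #{σ : Equiv.Perm κ | w ∘ σ = w ∘ τ}
      = #{σ : Equiv.Perm κ | w ∘ σ = w} := by
        refine card_equiv (Equiv.mulRight τ⁻¹) fun σ ↦ ?_
        simp only [mem_filter, mem_univ, true_and, Equiv.coe_mulRight, Equiv.Perm.coe_mul,
          Equiv.Perm.inv_def]
        exact (Equiv.comp_symm_eq τ w (w ∘ σ)).symm
    _ = ∏ i, (letterCount w i).factorial := by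
        simpa only [Fintype.card_subtype, letterCount] using DomMulAct.stabilizer_card w

lemma sum_comp_perm {M : Type*} [AddCommMonoid M] (F : (κ → ι) → M) (w : κ → ι) :
    ∑ σ : Equiv.Perm κ, F (w ∘ σ) =
      (∏ i, (letterCount w i).factorial) • ∑ w' with letterCount w' = letterCount w, F w' := by
  rw [smul_sum, ← sum_fiberwise_of_maps_to (t := {w' | letterCount w' = letterCount w})
    (g := fun σ : Equiv.Perm κ ↦ w ∘ σ) fun σ _ ↦ by simp [letterCount_comp_perm]]
  refine sum_congr rfl fun w' hw' ↦ ?_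
  rw [sum_congr rfl fun σ hσ ↦ congrArg F (mem_filter.1 hσ).2, sum_const,
    card_perm_comp_eq_of_letterCount_eq (mem_filter.1 hw').2]

lemma sum_perm_sum_comp_eq_sum_piAntidiag {M : Type*} [AddCommMonoid M]
    (h : (κ → ι) → (κ → ι) → M) :
    ∑ σ : Equiv.Perm κ, ∑ w, h w (w ∘ σ) =
      ∑ α ∈ piAntidiag univ (Fintype.card κ), (∏ i, (α i).factorial) •
        ∑ w with letterCount w = α, ∑ w' with letterCount w' = α, h w w' := by
  rw [sum_comm, ← sum_fiberwise_of_maps_to fun w _ ↦ letterCount_mem_piAntidiag w]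
  refine sum_congr rfl fun α _ ↦ ?_
  rw [smul_sum]
  refine sum_congr rfl fun w hw ↦ ?_
  rw [sum_comp_perm, (mem_filter.1 hw).2]

end Words

section Commutators

lemma sum_update_add_sum_update_eq_zero {κ ι K M : Type*} [Fintype κ] [DecidableEq κ] [Fintype ι]
    [Ring K] [AddCommGroup M] [Module K M] {C : Matrix ι ι K} (hC : C.transpose = -C) (p : κ)
    (h : (κ → ι) → (κ → ι) → M) :
    ∑ w : κ → ι, ∑ k, C (w p) k • h (Function.update w p k) w +
      ∑ w : κ → ι, ∑ k, C (w p) k • h w (Function.update w p k) = 0 := by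
  have skew (i k : ι) : C k i = -C i k := congrFun₂ hC i k
  rw [add_eq_zero_iff_eq_neg]
  simp only [← sum_neg_distrib, ← Fintype.sum_prod_type']
  let swap (x : (κ → ι) × ι) : (κ → ι) × ι := (Function.update x.1 p x.2, x.1 p)
  have swap_swap : Function.Involutive swap := fun x ↦ by simp [swap]
  refine Fintype.sum_equiv swap_swap.toPerm _ _ fun x ↦ ?_
  simp [swap, skew (x.1 p)]

lemma lie_prod_ofFn {R : Type*} [Ring R] {m : ℕ} (a : Fin m → R) (x : R) :
    ⁅(List.ofFn a).prod, x⁆ = ∑ p, (List.ofFn (Function.update a p ⁅a p, x⁆)).prod := by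
  induction m with
  | zero => simp [Ring.lie_def]
  | succ n ih =>
    induction a using Fin.consCases with | _ b a
    have leibniz (y z : R) : ⁅y * z, x⁆ = ⁅y, x⁆ * z + y * ⁅z, x⁆ := by
      simp only [Ring.lie_def]
      noncomm_ring
    simp only [Fin.sum_univ_succ, Fin.cons_zero, Fin.cons_succ, Fin.update_cons_zero,
      ← Fin.cons_update, List.ofFn_cons, List.prod_cons, leibniz, ih, mul_sum]

variable {K R ι : Type*} [CommRing K] [Ring R] [Algebra K R] [Fintype ι]

lemma lie_wordProd {Z : ι → R} {X : R} {C : Matrix ι ι K}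
    (hX : ∀ i, ⁅Z i, X⁆ = ∑ k, C i k • Z k) {m : ℕ} (w : Fin m → ι) :
    ⁅wordProd Z w, X⁆ = ∑ p, ∑ k, C (w p) k • wordProd Z (Function.update w p k) := by
  simp only [wordProd, lie_prod_ofFn, Function.comp_apply]
  refine sum_congr rfl fun p _ ↦ ?_
  have multilinear := (MultilinearMap.mkPiAlgebraFin K m R).map_update_sum univ p
    (fun k ↦ C (w p) k • Z k) (Z ∘ w)
  simpa only [MultilinearMap.map_update_smul, MultilinearMap.mkPiAlgebraFin_apply,
    ← Function.comp_update, ← hX] using multilinear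

lemma lie_wordProd_comp_perm {Z : ι → R} {X : R} {C : Matrix ι ι K}
    (hX : ∀ i, ⁅Z i, X⁆ = ∑ k, C i k • Z k) {m : ℕ} (w : Fin m → ι) (σ : Equiv.Perm (Fin m)) :
    ⁅wordProd Z (w ∘ σ), X⁆ =
      ∑ p, ∑ k, C (w p) k • wordProd Z (Function.update w p k ∘ σ) := by
  rw [lie_wordProd hX,
    ← Equiv.sum_comp σ fun p ↦ ∑ k, C (w p) k • wordProd Z (Function.update w p k ∘ σ)]
  simp only [Function.update_comp_eq_of_injective w σ.injective, Function.comp_apply]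

lemma exists_skew_lie_of_mem_span {Z : ι → R} {c : ι → ι → ι → K}
    (hc : ∀ i j k, c k j i = -c i j k) (hcomm : ∀ i j, ⁅Z i, Z j⁆ = ∑ k, c i j k • Z k)
    {X : R} (hX : X ∈ Submodule.span K (Set.range Z)) :
    ∃ C : Matrix ι ι K, C.transpose = -C ∧ ∀ i, ⁅Z i, X⁆ = ∑ k, C i k • Z k := by
  obtain ⟨a, rfl⟩ := (Submodule.mem_span_range_iff_exists_fun K).1 hX
  refine ⟨.of fun i k ↦ ∑ j, a j * c i j k, ?_, fun i ↦ ?_⟩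
  · ext i k
    simp [hc i _ k]
  · calc ⁅Z i, ∑ j, a j • Z j⁆
        = ∑ j, a j • ⁅Z i, Z j⁆ := by
          simp only [Ring.lie_def, mul_sum, sum_mul, mul_smul_comm, smul_mul_assoc, smul_sub,
            sum_sub_distrib]
      _ = ∑ k, (∑ j, a j * c i j k) • Z k := by
          simp only [hcomm, smul_sum, smul_smul, sum_smul]
          exact sum_comm

end Commutators

section Leibniz

lemma sum_wordProd_leibniz {K V M ι : Type*} [CommRing K] [AddCommGroup V] [Module K V]
    [AddCommGroup M] [Module K M] [Fintype ι] {Z : ι → Module.End K V} {X : Module.End K V}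
    {C : Matrix ι ι K} (hC : C.transpose = -C) (hX : ∀ i, ⁅Z i, X⁆ = ∑ k, C i k • Z k)
    {B : V →ₗ[K] V →ₗ[K] M} {D : Module.End K M}
    (hB : ∀ f g, D (B f g) = B (X f) g + B f (X g)) {m : ℕ} (σ : Equiv.Perm (Fin m)) (f g : V) :
    ∑ w : Fin m → ι, (B (wordProd Z w (X f)) (wordProd Z (w ∘ σ) g) +
        B (wordProd Z w f) (wordProd Z (w ∘ σ) (X g))) =
      D (∑ w, B (wordProd Z w f) (wordProd Z (w ∘ σ) g)) := by
  have apply_X (T : Module.End K V) (u : V) : T (X u) = X (T u) + ⁅T, X⁆ u := by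
    simp [Ring.lie_def]
  have error_terms_cancel : ∑ w : Fin m → ι, (B (⁅wordProd Z w, X⁆ f) (wordProd Z (w ∘ σ) g) +
      B (wordProd Z w f) (⁅wordProd Z (w ∘ σ), X⁆ g)) = 0 := by
    simp only [lie_wordProd_comp_perm hX]
    simp only [lie_wordProd hX, LinearMap.sum_apply, LinearMap.smul_apply, map_sum, map_smul,
      sum_add_distrib]
    rw [sum_comm, sum_comm (t := (univ : Finset (Fin m))), ← sum_add_distrib]
    exact sum_eq_zero fun p _ ↦ sum_update_add_sum_update_eq_zero hC p
      fun w w' ↦ B (wordProd Z w f) (wordProd Z (w' ∘ σ) g)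
  rw [map_sum, ← add_zero (∑ w, D _), ← error_terms_cancel, ← sum_add_distrib]
  refine sum_congr rfl fun w _ ↦ ?_
  rw [apply_X, apply_X, hB, map_add, map_add, LinearMap.add_apply]
  abel

variable {V M : Type*} [AddCommGroup V] [Module ℂ V] [AddCommGroup M] [Module ℂ M]

lemma symOp_eq_sum_wordProd (Z : Fin 3 → Module.End ℂ V) {α : Fin 3 → ℕ} {m : ℕ}
    (hα : α 0 + α 1 + α 2 = m) :
    symOp Z α = ∑ w : Fin m → Fin 3 with letterCount w = α, wordProd Z w := by
  subst hα
  simp only [symOp, funext_iff, letterCount, wordProd, Function.comp_def]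

lemma bilin_normSymOp (Z : Fin 3 → Module.End ℂ V) (B : V →ₗ[ℂ] V →ₗ[ℂ] M) (c : ℝ)
    (α : Fin 3 → ℕ) (f g : V) :
    B (normSymOp c Z α f) (normSymOp c Z α g) =
      ((c ^ 2 / (α 0 + α 1 + α 2).factorial : ℝ) : ℂ) •
        (∏ i, (α i).factorial) • B (symOp Z α f) (symOp Z α g) := by
  simp only [normSymOp, LinearMap.smul_apply, map_smul, smul_smul, ← Nat.cast_smul_eq_nsmul ℂ]
  congr 1
  norm_cast
  rw [mul_mul_mul_comm, Real.mul_self_sqrt (by positivity), Fin.prod_univ_three]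
  push_cast
  ring

lemma sum_bilin_normSymOp_eq_sum_perm (Z : Fin 3 → Module.End ℂ V) (B : V →ₗ[ℂ] V →ₗ[ℂ] M) (c : ℝ)
    (m : ℕ) (f g : V) :
    ∑ α ∈ Finset.Nat.antidiagonalTuple 3 m, B (normSymOp c Z α f) (normSymOp c Z α g) =
      ((c ^ 2 / m.factorial : ℝ) : ℂ) • ∑ σ : Equiv.Perm (Fin m), ∑ w : Fin m → Fin 3,
        B (wordProd Z w f) (wordProd Z (w ∘ σ) g) := by
  rw [sum_perm_sum_comp_eq_sum_piAntidiag fun w w' ↦ B (wordProd Z w f) (wordProd Z w' g),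
    Fintype.card_fin, piAntidiag_univ_fin_eq_antidiagonalTuple, smul_sum]
  refine sum_congr rfl fun α hα ↦ ?_
  rw [Finset.Nat.mem_antidiagonalTuple, Fin.sum_univ_three] at hα
  rw [bilin_normSymOp, symOp_eq_sum_wordProd Z hα, hα]
  simp only [LinearMap.sum_apply, map_sum]
  rw [sum_comm]

lemma sum_normSymOp_leibniz {Z : Fin 3 → Module.End ℂ V} {X : Module.End ℂ V}
    {C : Matrix (Fin 3) (Fin 3) ℂ} (hC : C.transpose = -C)
    (hX : ∀ i, ⁅Z i, X⁆ = ∑ k, C i k • Z k) {B : V →ₗ[ℂ] V →ₗ[ℂ] M} {D : Module.End ℂ M}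
    (hB : ∀ f g, D (B f g) = B (X f) g + B f (X g)) (c : ℝ) (m : ℕ) (f g : V) :
    ∑ α ∈ Finset.Nat.antidiagonalTuple 3 m, (B (normSymOp c Z α (X f)) (normSymOp c Z α g) +
        B (normSymOp c Z α f) (normSymOp c Z α (X g))) =
      D (∑ α ∈ Finset.Nat.antidiagonalTuple 3 m,
        B (normSymOp c Z α f) (normSymOp c Z α g)) := by
  simp only [sum_add_distrib, sum_bilin_normSymOp_eq_sum_perm, ← smul_add]
  simp only [← sum_add_distrib, sum_wordProd_leibniz hC hX hB, map_smul, map_sum]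

lemma leibniz_of_mem_span {K A ι : Type*} [CommRing K] [NonUnitalNonAssocRing A] [Module K A]
    [IsScalarTower K A A] [SMulCommClass K A A] {Z : ι → Module.End K A}
    (hder : ∀ i (f g : A), Z i (f * g) = Z i f * g + f * Z i g) {X : Module.End K A}
    (hX : X ∈ Submodule.span K (Set.range Z)) (f g : A) : X (f * g) = X f * g + f * X g := by
  induction hX using Submodule.span_induction with
  | mem X hX =>
    obtain ⟨i, rfl⟩ := hX
    exact hder i f g
  | zero => simp
  | add X Y _ _ hX hY =>
    simp only [LinearMap.add_apply, hX, hY, add_mul, mul_add]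
    abel
  | smul a X _ hX => simp only [LinearMap.smul_apply, hX, smul_add, smul_mul_assoc, mul_smul_comm]

end Leibniz

lemma ofReal_leviCivita_swap (i j k : Fin 3) : (leviCivita k j i : ℂ) = -leviCivita i j k := by
  unfold leviCivita
  push_cast
  ring

theorem integrated_leibniz_commutation_general {A M : Type*} [NonUnitalNonAssocRing A]
    [Module ℂ A] [IsScalarTower ℂ A A] [SMulCommClass ℂ A A] [AddCommGroup M] [Module ℂ M]
    {Z : Fin 3 → Module.End ℂ A}
    (hder : ∀ i (f g : A), Z i (f * g) = Z i f * g + f * Z i g)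
    {ε : Fin 3 → Fin 3 → Fin 3 → ℂ} (hε : ∀ i j k, ε k j i = -ε i j k)
    (hcomm : ∀ i j, ⁅Z i, Z j⁆ = ∑ k, ε i j k • Z k)
    {Int : A →ₗ[ℂ] M} (hInt : ∀ i (h : A), Int (Z i h) = 0)
    {X : Module.End ℂ A} (hX : X ∈ Submodule.span ℂ (Set.range Z))
    (c : ℝ) (m : ℕ) (f g : A) :
    ∑ α ∈ Finset.Nat.antidiagonalTuple 3 m,
      Int (normSymOp c Z α (X f) * normSymOp c Z α g
        + normSymOp c Z α f * normSymOp c Z α (X g)) = 0 := by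
  obtain ⟨C, hC, hCX⟩ := exists_skew_lie_of_mem_span hε hcomm hX
  have hIntX : ∀ h, Int (X h) = 0 := by
    obtain ⟨a, rfl⟩ := (Submodule.mem_span_range_iff_exists_fun ℂ).1 hX
    simp [hInt]
  have leibniz := sum_normSymOp_leibniz (B := LinearMap.mul ℂ A) hC hCX
    (leibniz_of_mem_span hder hX) c m f g
  simp only [LinearMap.mul_apply'] at leibniz
  rw [← map_sum, leibniz, hIntX]

/-- Integrated Leibniz-commutation lemma: with `X_± = -(Z₂ ± iZ₁)` and the integral
against the normalized Haar measure (modelled by a linear functional `Int` annihilating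
the left-invariant derivatives `Z_i h`),
`Σ_{|α|=m} ∫ ((Z^α X_± f)(Z^α g) + (Z^α f)(Z^α X_± g)) dμ = 0`. -/
theorem integrated_leibniz_commutation {A : Type*} [CommRing A] [Algebra ℂ A]
    (Z : Fin 3 → Module.End ℂ A)
    (hder : ∀ i (f g : A), Z i (f * g) = Z i f * g + f * Z i g)
    (hcomm : ∀ i j, Z i * Z j - Z j * Z i = ∑ k, ((leviCivita i j k : ℝ) : ℂ) • Z k)
    (Int : A →ₗ[ℂ] ℂ) (hInt : ∀ i (h : A), Int (Z i h) = 0)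
    (Xp Xm : Module.End ℂ A)
    (hXp : Xp = -(Z 1 + Complex.I • Z 0))
    (hXm : Xm = -(Z 1 - Complex.I • Z 0))
    (c : ℝ) (hc : 0 < c) (m : ℕ) (f g : A) :
    (∑ α ∈ Finset.Nat.antidiagonalTuple 3 m,
        Int (normSymOp c Z α (Xp f) * normSymOp c Z α g
          + normSymOp c Z α f * normSymOp c Z α (Xp g)) = 0) ∧
    (∑ α ∈ Finset.Nat.antidiagonalTuple 3 m,
        Int (normSymOp c Z α (Xm f) * normSymOp c Z α g
          + normSymOp c Z α f * normSymOp c Z α (Xm g)) = 0) := by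
  have hZ (i : Fin 3) : Z i ∈ Submodule.span ℂ (Set.range Z) := Submodule.subset_span ⟨i, rfl⟩
  have hIZ : Complex.I • Z 0 ∈ Submodule.span ℂ (Set.range Z) := Submodule.smul_mem _ _ (hZ 0)
  exact ⟨integrated_leibniz_commutation_general hder ofReal_leviCivita_swap hcomm hInt
      (hXp ▸ neg_mem (add_mem (hZ 1) hIZ)) c m f g,
    integrated_leibniz_commutation_general hder ofReal_leviCivita_swap hcomm hInt
      (hXm ▸ neg_mem (sub_mem (hZ 1) hIZ)) c m f g⟩
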